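/- arXiv:1608.04279 — 2 statements merged into one kernel-verified Lean document; each statement's English description precedes it below -/
import Mathlib

section
/- Let d ≥ 2 and 2 ≤ k ≤ r be integers. There exists a family of 3r − 3 + (k−1)(d−2) points a : Fin (3r−3+(k−1)(d−2)) → ℝ^d such that for every function I : Fin (3r−3+(k−1)(d−2)) → Fin r there exists a k-element subset S ⊆ Fin r with ⋂_{i ∈ S} conv{a_j : I(j) = i} = ∅. (Equivalently, T(d,r,k) ≥ 3r − 2 + (k−1)(d−2).) -/
open Finset in
/-- A point of the convex hull of part of a finite family is a convex combination of the whole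
family whose weights vanish outside that part. -/
theorem exists_weights_of_mem_convexHull_image {J E : Type*} [Fintype J] [AddCommGroup E]
    [Module ℝ E] (p : J → E) (s : Set J) {x : E} (hx : x ∈ convexHull ℝ (p '' s)) :
    ∃ w : J → ℝ, (∀ j, 0 ≤ w j) ∧ ∑ j, w j = 1 ∧ (∀ j ∉ s, w j = 0) ∧ ∑ j, w j • p j = x := by
  classical
  refine convexHull_min (t := {x | ∃ w : J → ℝ, (∀ j, 0 ≤ w j) ∧ ∑ j, w j = 1 ∧
    (∀ j ∉ s, w j = 0) ∧ ∑ j, w j • p j = x}) ?_ ?_ hx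
  · rintro _ ⟨j, hj, rfl⟩
    refine ⟨Pi.single j 1, fun i => ?_, by simp, fun i hi => ?_, ?_⟩
    · by_cases h : i = j
      · subst h; simp
      · simp [h]
    · have h : i ≠ j := fun h => hi (h ▸ hj)
      simp [h]
    · simp [Pi.single_apply, ite_smul]
  · rintro x ⟨v, hv0, hv1, hvs, rfl⟩ y ⟨w, hw0, hw1, hws, rfl⟩ a b ha hb hab
    refine ⟨fun j => a * v j + b * w j, fun j => ?_, ?_, fun j hj => ?_, ?_⟩
    · have := hv0 j
      have := hw0 j
      positivity
    · rw [sum_add_distrib, ← mul_sum, ← mul_sum, hv1, hw1]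
      linarith
    · simp [hvs j hj, hws j hj]
    · simp only [add_smul, mul_smul, sum_add_distrib, smul_sum]

/-- The counting obstruction: `N i P` is the number of points of the part `P` on the ray `i`. -/
theorem not_exists_ray_counts {r : ℕ} (N : Fin 3 → Fin r → ℕ) (hN : ∀ i, ∑ P, N i P < r)
    (hne : ∀ P, ∃ i, N i P ≠ 0)
    (hpair : ∀ i j l, i ≠ j → i ≠ l → j ≠ l → ∀ P Q, P ≠ Q → N i P = 0 → N j Q = 0 →
      1 ≤ N l P ∧ 1 ≤ N l Q ∧ 3 ≤ N l P + N l Q) : False := by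
  have hZ : ∀ i, ∃ P, N i P = 0 := by
    intro i
    by_contra! h
    have : ∑ _P : Fin r, 1 ≤ ∑ P, N i P :=
      Finset.sum_le_sum fun P _ => Nat.one_le_iff_ne_zero.2 (h P)
    simp only [Finset.sum_const, Finset.card_univ, Fintype.card_fin, smul_eq_mul, mul_one] at this
    exact absurd (hN i) (by omega)
  have hdisj : ∀ i j l : Fin 3, i ≠ j → i ≠ l → j ≠ l → ∀ P, N i P = 0 → N j P ≠ 0 := by
    intro i j l hij hil hjl P hi hj
    obtain ⟨Q, hQ⟩ := hZ l
    by_cases hPQ : P = Q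
    · subst hPQ
      obtain ⟨m, hm⟩ := hne P
      have : m = i ∨ m = j ∨ m = l := by omega
      rcases this with rfl | rfl | rfl <;> contradiction
    · have := (hpair i l j hil hij hjl.symm P Q hPQ hi hQ).1
      omega
  have hcount : ∀ i l : Fin 3, (∀ P, N i P = 0 → 2 ≤ N l P) →
      (Finset.univ.filter fun P => N i P = 0).card <
        (Finset.univ.filter fun P => N l P = 0).card := by
    intro i l h
    have hle : ∑ P : Fin r, (1 + if N i P = 0 then 1 else 0) ≤
        ∑ P : Fin r, (N l P + if N l P = 0 then 1 else 0) := by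
      refine Finset.sum_le_sum fun P _ => ?_
      by_cases hi : N i P = 0
      · have := h P hi
        split_ifs <;> omega
      · split_ifs <;> omega
    rw [Finset.sum_add_distrib, Finset.sum_add_distrib, ← Finset.card_filter,
      ← Finset.card_filter] at hle
    simp only [Finset.sum_const, Finset.card_univ, Fintype.card_fin, smul_eq_mul, mul_one] at hle
    have := hN l
    omega
  have hlt : ∀ i j l : Fin 3, i ≠ j → i ≠ l → j ≠ l →
      (Finset.univ.filter fun P => N i P = 0).card <
        (Finset.univ.filter fun P => N l P = 0).card ∨
      (Finset.univ.filter fun P => N j P = 0).card <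
        (Finset.univ.filter fun P => N l P = 0).card := by
    intro i j l hij hil hjl
    by_cases h : ∀ P, N i P = 0 → 2 ≤ N l P
    · exact Or.inl (hcount i l h)
    · refine Or.inr (hcount j l fun Q hQ => ?_)
      push Not at h
      obtain ⟨P, hP, hP2⟩ := h
      have hPQ : P ≠ Q := by
        rintro rfl
        exact hdisj i j l hij hil hjl P hP hQ
      have := hpair i j l hij hil hjl P Q hPQ hP hQ
      omega
  have h0 := hlt 1 2 0 (by decide) (by decide) (by decide)
  have h1 := hlt 0 2 1 (by decide) (by decide) (by decide)
  have h2 := hlt 0 1 2 (by decide) (by decide) (by decide)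
  omega

/-- `m` points on each of three rays that positively span a coordinate plane, together with each
of the `e` remaining basis vectors repeated `q` times. -/
noncomputable def reayPoint (m e q : ℕ) :
    (Fin 3 × Fin m) ⊕ (Fin e × Fin q) → EuclideanSpace ℝ (Fin (e + 2))
  | .inl (i, t) => WithLp.toLp 2 (Fin.cons (((t : ℕ) + 1) * (![1, 0, -1] : Fin 3 → ℝ) i)
      (Fin.cons (((t : ℕ) + 1) * (![0, 1, -1] : Fin 3 → ℝ) i) 0))
  | .inr (c, _) => EuclideanSpace.single c.succ.succ 1

section Coordinates

variable {m e q : ℕ} (w : (Fin 3 × Fin m) ⊕ (Fin e × Fin q) → ℝ)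

/-- The total position along the ray `i` of a weighted sum of the points `reayPoint`. -/
noncomputable def rayMoment (i : Fin 3) : ℝ := ∑ t, w (.inl (i, t)) * ((t : ℕ) + 1)

theorem sum_smul_reayPoint_zero :
    (∑ j, w j • reayPoint m e q j) 0 = rayMoment w 0 - rayMoment w 2 := by
  simp [reayPoint, rayMoment, Fintype.sum_sum_type, Fintype.sum_prod_type, Fin.sum_univ_three,
    sub_eq_add_neg, ← Finset.sum_neg_distrib, mul_add, add_comm]

theorem sum_smul_reayPoint_one :
    (∑ j, w j • reayPoint m e q j) 1 = rayMoment w 1 - rayMoment w 2 := by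
  change (∑ j, w j • reayPoint m e q j) (Fin.succ 0) = _
  simp [-Fin.succ_zero_eq_one, -Fin.succ_zero_eq_one', reayPoint, rayMoment,
    Fintype.sum_sum_type, Fintype.sum_prod_type, Fin.sum_univ_three,
    sub_eq_add_neg, ← Finset.sum_neg_distrib, mul_add, add_comm]

theorem sum_smul_reayPoint_succ_succ (c : Fin e) :
    (∑ j, w j • reayPoint m e q j) c.succ.succ = ∑ t, w (.inr (c, t)) := by
  simp [reayPoint, Fintype.sum_sum_type, Fintype.sum_prod_type, Pi.single_apply,
    Finset.sum_ite_eq]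

variable {w}

theorem rayMoment_nonneg (hw : ∀ j, 0 ≤ w j) (i : Fin 3) : 0 ≤ rayMoment w i :=
  Finset.sum_nonneg fun t _ => mul_nonneg (hw _) (by positivity)

theorem eq_zero_of_rayMoment_eq_zero (hw : ∀ j, 0 ≤ w j) {i : Fin 3} (h : rayMoment w i = 0)
    (t : Fin m) : w (.inl (i, t)) = 0 := by
  have := (Finset.sum_eq_zero_iff_of_nonneg
    fun t _ => mul_nonneg (hw (.inl (i, t))) (by positivity : (0 : ℝ) ≤ (t : ℕ) + 1)).1 h t
    (Finset.mem_univ t)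
  exact (mul_eq_zero.1 this).resolve_right (by positivity)

theorem rayMoment_sub_eq {w' : (Fin 3 × Fin m) ⊕ (Fin e × Fin q) → ℝ}
    (h : ∑ j, w j • reayPoint m e q j = ∑ j, w' j • reayPoint m e q j) (i j : Fin 3) :
    rayMoment w i - rayMoment w j = rayMoment w' i - rayMoment w' j := by
  have h0 := sum_smul_reayPoint_zero w
  have h1 := sum_smul_reayPoint_one w
  rw [h, sum_smul_reayPoint_zero] at h0
  rw [h, sum_smul_reayPoint_one] at h1
  fin_cases i <;> fin_cases j <;> simp <;> linarith

/-- Weights vanishing off a single ray have total weight one on that ray. -/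
theorem sum_ray_eq_one (hw1 : ∑ j, w j = 1) (hinr : ∀ c, w (.inr c) = 0) {i j l : Fin 3}
    (hij : i ≠ j) (hil : i ≠ l) (hjl : j ≠ l) (hi : ∀ t, w (.inl (i, t)) = 0)
    (hj : ∀ t, w (.inl (j, t)) = 0) : ∑ t, w (.inl (l, t)) = 1 := by
  rw [Fintype.sum_sum_type, Fintype.sum_prod_type] at hw1
  simp only [hinr, Finset.sum_const_zero, add_zero] at hw1
  rw [← hw1]
  refine (Finset.sum_eq_single_of_mem (f := fun x => ∑ t, w (.inl (x, t))) l
    (Finset.mem_univ l) fun b _ hb => ?_).symm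
  have : b = i ∨ b = j := by omega
  rcases this with rfl | rfl
  · exact Finset.sum_eq_zero fun t _ => hi t
  · exact Finset.sum_eq_zero fun t _ => hj t

end Coordinates

/-- The number of points of the part `P` on the ray `i`. -/
def rayCount {m e q r : ℕ} (I : (Fin 3 × Fin m) ⊕ (Fin e × Fin q) → Fin r) (i : Fin 3)
    (P : Fin r) : ℕ :=
  (Finset.univ.filter fun t => I (.inl (i, t)) = P).card

section Partition

variable {m e q r : ℕ} {I : (Fin 3 × Fin m) ⊕ (Fin e × Fin q) → Fin r}

theorem sum_rayCount (i : Fin 3) : ∑ P, rayCount I i P = m := by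
  simpa [rayCount] using (Finset.card_eq_sum_card_fiberwise
    (f := fun t => I (.inl (i, t))) (s := Finset.univ) (t := Finset.univ)
    fun _ _ => Finset.mem_coe.2 (Finset.mem_univ _)).symm

variable {w : (Fin 3 × Fin m) ⊕ (Fin e × Fin q) → ℝ} {P : Fin r}

theorem eq_zero_of_rayCount_eq_zero (hw : ∀ j, I j ≠ P → w j = 0) {i : Fin 3}
    (h : rayCount I i P = 0) (t : Fin m) : w (.inl (i, t)) = 0 := by
  rw [rayCount, Finset.card_eq_zero, Finset.filter_eq_empty_iff] at h
  exact hw _ (h (Finset.mem_univ t))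

theorem rayMoment_eq_zero_of_rayCount_eq_zero (hw : ∀ j, I j ≠ P → w j = 0) {i : Fin 3}
    (h : rayCount I i P = 0) : rayMoment w i = 0 :=
  Finset.sum_eq_zero fun t _ => by rw [eq_zero_of_rayCount_eq_zero hw h t, zero_mul]

theorem one_le_rayCount (hw : ∀ j, I j ≠ P → w j = 0) {l : Fin 3}
    (h : ∑ t, w (.inl (l, t)) = 1) : 1 ≤ rayCount I l P := by
  rw [Nat.one_le_iff_ne_zero]
  intro h0
  rw [Finset.sum_eq_zero fun t _ => eq_zero_of_rayCount_eq_zero hw h0 t] at h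
  exact zero_ne_one h

/-- Weights concentrated on a ray where the part has a single point have the position of that point
as their moment. -/
theorem exists_rayMoment_eq_of_rayCount_eq_one (hw : ∀ j, I j ≠ P → w j = 0) {l : Fin 3}
    (h : ∑ t, w (.inl (l, t)) = 1) (h1 : rayCount I l P = 1) :
    ∃ t : Fin m, I (.inl (l, t)) = P ∧ rayMoment w l = (t : ℕ) + 1 := by
  obtain ⟨t, ht⟩ := Finset.card_eq_one.1 h1
  have hmem : ∀ s, I (.inl (l, s)) = P ↔ s = t := fun s => by
    simpa using Finset.ext_iff.1 ht s
  have hzero : ∀ s ≠ t, w (.inl (l, s)) = 0 := fun s hs => hw _ fun h => hs ((hmem s).1 h)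
  refine ⟨t, (hmem t).2 rfl, ?_⟩
  rw [Fintype.sum_eq_single t hzero] at h
  rw [rayMoment, Fintype.sum_eq_single t fun s hs => by rw [hzero s hs, zero_mul], h, one_mul]

/-- A common point of `q + 1` parts has no component along the repeated basis vectors, since
each of these misses one of the parts. -/
theorem coord_succ_succ_eq_zero {S : Finset (Fin r)} (hS : q < S.card)
    {x : EuclideanSpace ℝ (Fin (e + 2))}
    (hx : ∀ P ∈ S, x ∈ convexHull ℝ (reayPoint m e q '' {j | I j = P})) (c : Fin e) :
    x c.succ.succ = 0 := by
  obtain ⟨P, hPS, hP⟩ : ∃ P ∈ S, P ∉ Finset.univ.image fun t : Fin q => I (.inr (c, t)) := by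
    by_contra! h
    have := (Finset.card_le_card h).trans Finset.card_image_le
    rw [Finset.card_univ, Fintype.card_fin] at this
    omega
  obtain ⟨w, -, -, hw, rfl⟩ := exists_weights_of_mem_convexHull_image _ _ (hx P hPS)
  rw [sum_smul_reayPoint_succ_succ]
  exact Finset.sum_eq_zero fun t _ => hw _ fun h =>
    hP (Finset.mem_image.2 ⟨t, Finset.mem_univ t, h⟩)

theorem exists_planar_weights {x : EuclideanSpace ℝ (Fin (e + 2))}
    (hx : x ∈ convexHull ℝ (reayPoint m e q '' {j | I j = P}))
    (hx0 : ∀ c : Fin e, x c.succ.succ = 0) :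
    ∃ w : (Fin 3 × Fin m) ⊕ (Fin e × Fin q) → ℝ, (∀ j, 0 ≤ w j) ∧ ∑ j, w j = 1 ∧
      (∀ j, I j ≠ P → w j = 0) ∧ (∀ c, w (.inr c) = 0) ∧ ∑ j, w j • reayPoint m e q j = x := by
  obtain ⟨w, hw0, hw1, hw, rfl⟩ := exists_weights_of_mem_convexHull_image _ _ hx
  refine ⟨w, hw0, hw1, hw, fun ⟨c, t⟩ => ?_, rfl⟩
  have := hx0 c
  rw [sum_smul_reayPoint_succ_succ] at this
  exact (Finset.sum_eq_zero_iff_of_nonneg fun t _ => hw0 _).1 this t (Finset.mem_univ t)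

/-- Two distinct parts missing different rays can only meet on the third ray, where they need
at least three points in total. -/
theorem rayCount_of_missing {Q : Fin r} (hPQ : P ≠ Q) {x : EuclideanSpace ℝ (Fin (e + 2))}
    (hxP : x ∈ convexHull ℝ (reayPoint m e q '' {j | I j = P}))
    (hxQ : x ∈ convexHull ℝ (reayPoint m e q '' {j | I j = Q}))
    (hx0 : ∀ c : Fin e, x c.succ.succ = 0) {i j l : Fin 3} (hij : i ≠ j) (hil : i ≠ l)
    (hjl : j ≠ l) (hP : rayCount I i P = 0) (hQ : rayCount I j Q = 0) :
    1 ≤ rayCount I l P ∧ 1 ≤ rayCount I l Q ∧ 3 ≤ rayCount I l P + rayCount I l Q := by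
  obtain ⟨v, hv0, hv1, hv, hvinr, hvx⟩ := exists_planar_weights hxP hx0
  obtain ⟨w, hw0, hw1, hw, hwinr, hwx⟩ := exists_planar_weights hxQ hx0
  have hsub := rayMoment_sub_eq (hvx.trans hwx.symm)
  have hvi := rayMoment_eq_zero_of_rayCount_eq_zero hv hP
  have hwj := rayMoment_eq_zero_of_rayCount_eq_zero hw hQ
  have hvj : rayMoment v j = 0 := by
    linarith [hsub i j, rayMoment_nonneg hv0 j, rayMoment_nonneg hw0 i]
  have hwi : rayMoment w i = 0 := by linarith [hsub i j]
  have hvl := sum_ray_eq_one hv1 hvinr hij hil hjl (eq_zero_of_rayMoment_eq_zero hv0 hvi)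
    (eq_zero_of_rayMoment_eq_zero hv0 hvj)
  have hwl := sum_ray_eq_one hw1 hwinr hij hil hjl (eq_zero_of_rayMoment_eq_zero hw0 hwi)
    (eq_zero_of_rayMoment_eq_zero hw0 hwj)
  have hP1 := one_le_rayCount hv hvl
  have hQ1 := one_le_rayCount hw hwl
  refine ⟨hP1, hQ1, ?_⟩
  by_contra hlt
  obtain ⟨s, hsP, hs⟩ := exists_rayMoment_eq_of_rayCount_eq_one hv hvl (by omega)
  obtain ⟨t, htQ, ht⟩ := exists_rayMoment_eq_of_rayCount_eq_one hw hwl (by omega)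
  have hst : (s : ℝ) = (t : ℕ) := by linarith [hsub l i]
  rw [Fin.ext (Nat.cast_injective hst)] at hsP
  exact hPQ (hsP.symm.trans htQ)

theorem exists_rayCount_ne_zero {x : EuclideanSpace ℝ (Fin (e + 2))}
    (hxP : x ∈ convexHull ℝ (reayPoint m e q '' {j | I j = P}))
    (hx0 : ∀ c : Fin e, x c.succ.succ = 0) : ∃ i, rayCount I i P ≠ 0 := by
  by_contra! h
  obtain ⟨w, -, hw1, hw, hwinr, -⟩ := exists_planar_weights hxP hx0
  refine zero_ne_one ((Finset.sum_eq_zero fun j _ => ?_).symm.trans hw1)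
  rcases j with ⟨i, t⟩ | c
  · exact eq_zero_of_rayCount_eq_zero hw (h i) t
  · exact hwinr c

end Partition

theorem exists_iInter_convexHull_reayPoint_eq_empty {m e q r : ℕ} (hm : m < r) (hq : 1 ≤ q)
    (hqr : q + 1 ≤ r) (I : (Fin 3 × Fin m) ⊕ (Fin e × Fin q) → Fin r) :
    ∃ S : Finset (Fin r), S.card = q + 1 ∧
      (⋂ i ∈ S, convexHull ℝ (reayPoint m e q '' {j | I j = i})) = ∅ := by
  by_contra! h
  have hmeet : ∀ P Q : Fin r, ∃ x : EuclideanSpace ℝ (Fin (e + 2)),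
      x ∈ convexHull ℝ (reayPoint m e q '' {j | I j = P}) ∧
      x ∈ convexHull ℝ (reayPoint m e q '' {j | I j = Q}) ∧
      ∀ c : Fin e, x c.succ.succ = 0 := by
    intro P Q
    obtain ⟨S, hPQS, hS⟩ := Finset.exists_superset_card_eq (s := {P, Q}) (n := q + 1)
      (Finset.card_le_two.trans (by omega)) (by simpa using hqr)
    obtain ⟨x, hx⟩ := h S hS
    rw [Set.mem_iInter₂] at hx
    exact ⟨x, hx P (hPQS (by simp)), hx Q (hPQS (by simp)),
      coord_succ_succ_eq_zero (by omega) hx⟩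
  refine not_exists_ray_counts (rayCount I) (fun i => (sum_rayCount i).trans_lt hm)
    (fun P => ?_) fun i j l hij hil hjl P Q hPQ hP hQ => ?_
  · obtain ⟨x, hx, -, hx0⟩ := hmeet P P
    exact exists_rayCount_ne_zero hx hx0
  · obtain ⟨x, hxP, hxQ, hx0⟩ := hmeet P Q
    exact rayCount_of_missing hPQ hxP hxQ hx0 hij hil hjl hP hQ

/-- Lower bound `T(d,r,k) ≥ 3r - 2 + (k-1)(d-2)` for Reay's relaxed Tverberg problem:
there is a family of `3r - 3 + (k-1)(d-2)` points in `ℝ^d` such that for every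
partition of the index set into `r` parts, some `k` of the parts have convex hulls
with empty intersection. -/
theorem reay_lower_bound (d r k : ℕ) (hd : 2 ≤ d) (hk : 2 ≤ k) (hkr : k ≤ r) :
    ∃ a : Fin (3 * r - 3 + (k - 1) * (d - 2)) → EuclideanSpace ℝ (Fin d),
      ∀ I : Fin (3 * r - 3 + (k - 1) * (d - 2)) → Fin r,
        ∃ S : Finset (Fin r), S.card = k ∧
          (⋂ i ∈ S, convexHull ℝ (a '' {j | I j = i})) = ∅ := by
  obtain ⟨e, rfl⟩ := Nat.exists_eq_add_of_le' hd
  obtain ⟨q, rfl⟩ := Nat.exists_eq_add_of_le' (one_le_two.trans hk)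
  obtain ⟨m, rfl⟩ := Nat.exists_eq_add_of_le' (one_le_two.trans (hk.trans hkr))
  have hcard : Fintype.card (Fin (3 * (m + 1) - 3 + (q + 1 - 1) * (e + 2 - 2))) =
      Fintype.card ((Fin 3 × Fin m) ⊕ (Fin e × Fin q)) := by
    simp only [Fintype.card_fin, Fintype.card_sum, Fintype.card_prod, Nat.add_sub_cancel,
      mul_add, mul_one, mul_comm q e]
  let φ := Fintype.equivOfCardEq hcard
  refine ⟨reayPoint m e q ∘ φ, fun I => ?_⟩
  obtain ⟨S, hS, hempty⟩ := exists_iInter_convexHull_reayPoint_eq_empty (e := e)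
    (Nat.lt_succ_self m) (by omega) hkr (I ∘ φ.symm)
  refine ⟨S, hS, ?_⟩
  rw [← hempty]
  refine Set.iInter₂_congr fun i _ => ?_
  rw [Set.image_comp, φ.image_eq_preimage_symm]
  rfl
end

section
/- Let m ≥ 2, let C_1, …, C_m be sets (subsets of an arbitrary type α), and let W be a finite set such that |C_i ∩ C_j ∩ W| = 1 for all i ≠ j (W is a transversal of the pairwise intersections). If no element of W belongs to all of C_1, …, C_m, then m ≤ |W|. -/
/-- Combinatorial thrackle bound: if `C₁, …, C_m` (with `m ≥ 2`) are sets admitting a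
finite transversal `W` of their pairwise intersections, i.e. `|C i ∩ C j ∩ W| = 1`
for all `i ≠ j`, and no element of `W` belongs to all the `C i`, then `m ≤ |W|`. -/
theorem comb_thrackle {α : Type*} (m : ℕ) (hm : 2 ≤ m)
    (C : Fin m → Set α) (W : Finset α)
    (htrans : ∀ i j, i ≠ j → (C i ∩ C j ∩ (W : Set α)).ncard = 1)
    (hproper : ∀ w ∈ W, ∃ i, w ∉ C i) :
    m ≤ W.card := by
  have exists_common : ∀ i j, i ≠ j → ∃ w ∈ W, w ∈ C i ∧ w ∈ C j := by
    intro i j hij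
    obtain ⟨w, hw⟩ := Set.ncard_eq_one.mp (htrans i j hij)
    have hmem : w ∈ C i ∩ C j ∩ (W : Set α) := hw ▸ Set.mem_singleton w
    exact ⟨w, hmem.2, hmem.1⟩
  have common_unique : ∀ i j, i ≠ j → ∀ w ∈ W, ∀ v ∈ W,
      w ∈ C i → w ∈ C j → v ∈ C i → v ∈ C j → w = v := by
    intro i j hij w hw v hv hwi hwj hvi hvj
    obtain ⟨u, hu⟩ := Set.ncard_eq_one.mp (htrans i j hij)
    exact (hu ▸ Set.subsingleton_singleton : (C i ∩ C j ∩ (W : Set α)).Subsingleton)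
      ⟨⟨hwi, hwj⟩, hw⟩ ⟨⟨hvi, hvj⟩, hv⟩
  -- The indices are the points and the elements of `W` the lines of a linear space.
  let : Membership (Fin m) W := ⟨fun w i => (w : α) ∈ C i⟩
  let : Configuration.HasLines (Fin m) W :=
    { exists_point := fun w => hproper w w.2
      exists_line := by
        intro i
        by_contra! hall
        have hsub : ∀ w ∈ W, w ∈ C i := fun w hw => hall ⟨w, hw⟩
        have : Nontrivial (Fin m) := Fin.nontrivial_iff_two_le.mpr hm
        obtain ⟨j, hji⟩ := exists_ne i
        obtain ⟨w, hw, hwi, hwj⟩ := exists_common i j hji.symm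
        obtain ⟨k, hwk⟩ := hproper w hw
        have hjk : j ≠ k := fun h => hwk (h ▸ hwj)
        obtain ⟨v, hv, hvj, hvk⟩ := exists_common j k hjk
        exact hwk (common_unique i j hji.symm w hw v hv hwi hwj (hsub v hv) hvj ▸ hvk)
      eq_or_eq := by
        intro i j w v hwi hwj hvi hvj
        by_cases hij : i = j
        · exact Or.inl hij
        · exact Or.inr (Subtype.ext
            (common_unique i j hij w w.2 v v.2 hwi hwj hvi hvj))
      mkLine := fun {i j} hij =>
        ⟨(exists_common i j hij).choose, (exists_common i j hij).choose_spec.1⟩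
      mkLine_ax := fun {i j} hij => (exists_common i j hij).choose_spec.2 }
  simpa using Configuration.HasLines.card_le (Fin m) W
end
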